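/- Let ⟨R,C⟩ be a win-lose bimatrix game with the positive utility property whose set of Nash equilibria is finite, of cardinality m. Then the set of Nash equilibria of the GHR-symmetrization of ⟨R,C⟩ is finite and has cardinality exactly m·(m + 2). -/

import Mathlib

open Finset

/-- `x` is a probability distribution on the finite type `α`. -/
def IsDist {α : Type*} [Fintype α] (x : α → ℝ) : Prop :=
  (∀ s, 0 ≤ x s) ∧ ∑ s, x s = 1

/-- Expected utility, in a bimatrix game, of the player whose utility matrix is `M`. -/
noncomputable def pay {α : Type*} [Fintype α] (M : α → α → ℝ) (x y : α → ℝ) : ℝ :=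
  ∑ s₁, ∑ s₂, x s₁ * y s₂ * M s₁ s₂

/-- `⟨x, y⟩` is a (mixed) Nash equilibrium of the bimatrix game `⟨R, C⟩`. -/
def IsNash {α : Type*} [Fintype α] (R C : α → α → ℝ) (x y : α → ℝ) : Prop :=
  IsDist x ∧ IsDist y ∧
    (∀ x', IsDist x' → pay R x' y ≤ pay R x y) ∧
    (∀ y', IsDist y' → pay C x y' ≤ pay C x y)

/-- The pair `p` is a Nash equilibrium of the bimatrix game `⟨R, C⟩`. -/
def NEPair {α : Type*} [Fintype α] (R C : α → α → ℝ) (p : (α → ℝ) × (α → ℝ)) : Prop :=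
  IsNash R C p.1 p.2

/-- All entries of `M` lie in `{0, 1}`. -/
def WinLose {α : Type*} (M : α → α → ℝ) : Prop :=
  ∀ s₁ s₂, M s₁ s₂ = 0 ∨ M s₁ s₂ = 1

/-- The matrix `S = [[0, R], [Cᵀ, 0]]` of the GHR-symmetrization of `⟨R, C⟩`. -/
def ghrS {n : ℕ} (R C : Fin n → Fin n → ℝ) :
    (Fin n ⊕ Fin n) → (Fin n ⊕ Fin n) → ℝ
  | .inl i, .inr j => R i j
  | .inr i, .inl j => C j i
  | _, _ => 0

/-- The transpose `Sᵀ` of the matrix of the GHR-symmetrization. -/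
def ghrST {n : ℕ} (R C : Fin n → Fin n → ℝ) :
    (Fin n ⊕ Fin n) → (Fin n ⊕ Fin n) → ℝ :=
  fun a b => ghrS R C b a

/-- The balanced mixture `a ∗ b` of `a` and `b`, a mixed profile of the
GHR-symmetrization of `⟨R, C⟩` (the two halves of each strategy vector being indexed
by `Fin n ⊕ Fin n`). -/
noncomputable def bmix {n : ℕ} (R C : Fin n → Fin n → ℝ)
    (a b : (Fin n → ℝ) × (Fin n → ℝ)) :
    ((Fin n ⊕ Fin n) → ℝ) × ((Fin n ⊕ Fin n) → ℝ) :=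
  ( Sum.elim (fun s => pay R b.1 b.2 / (pay R b.1 b.2 + pay C a.1 a.2) * a.1 s)
             (fun s => pay C a.1 a.2 / (pay R b.1 b.2 + pay C a.1 a.2) * b.2 s),
    Sum.elim (fun s => pay R a.1 a.2 / (pay R a.1 a.2 + pay C b.1 b.2) * b.1 s)
             (fun s => pay C b.1 b.2 / (pay R a.1 a.2 + pay C b.1 b.2) * a.2 s) )

/-!
Drop the normalization of mixed strategies and normalize payoffs instead: consider the pairs
`x, y ≥ 0` such that each pure strategy earns at most `1` against the opponent's vector, and exactly
`1` when it is in the support. These are the completely labeled pairs of the best reply polytopes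
used by the Lemke–Howson algorithm. When equilibrium payoffs are positive, rescaling identifies the
Nash equilibria with the nonzero completely labeled pairs, so there are `m + 1` of the latter.

Because `S` is block antidiagonal, the constraints on a completely labeled pair
`((x₁, x₂), (y₁, y₂))` of `⟨S, Sᵀ⟩` decouple: they say that `(x₁, y₂)` and `(y₁, x₂)` are
completely labeled pairs of `⟨R, C⟩`. Hence the symmetrization has `(m + 1)² - 1 = m (m + 2)` Nash
equilibria.
-/

open Matrix

section Distributions

variable {α : Type*} [Fintype α]

lemma IsDist.pos {x : α → ℝ} (hx : IsDist x) : 0 < x :=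
  lt_of_le_of_ne hx.1 fun h ↦ by simpa [← h] using hx.2

lemma isDist_inv_sum_smul {x : α → ℝ} (hx : 0 < x) : IsDist ((∑ i, x i)⁻¹ • x) :=
  ⟨smul_nonneg (inv_nonneg.2 (Fintype.sum_pos hx).le) hx.le, by
    simp only [Pi.smul_apply, smul_eq_mul, ← mul_sum, inv_mul_cancel₀ (Fintype.sum_pos hx).ne']⟩

lemma IsDist.sum_smul {x : α → ℝ} (hx : IsDist x) (c : ℝ) : ∑ i, (c • x) i = c := by
  simp only [Pi.smul_apply, smul_eq_mul, ← mul_sum, hx.2, mul_one]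

lemma pay_eq_dotProduct (M : Matrix α α ℝ) (x y : α → ℝ) : pay M x y = x ⬝ᵥ M *ᵥ y := by
  simp only [pay, dotProduct, mulVec, mul_sum]
  exact sum_congr rfl fun i _ ↦ sum_congr rfl fun j _ ↦ by ring

lemma pay_transpose (M : Matrix α α ℝ) (x y : α → ℝ) : pay Mᵀ y x = pay M x y := by
  rw [pay_eq_dotProduct, pay_eq_dotProduct, mulVec_transpose, dotProduct_comm, dotProduct_mulVec]

end Distributions

section BestReply

/-- The nonnegative vector `x`, not necessarily normalized, is supported on pure best replies to
`y` under the utility matrix `M`, and `u` is the payoff of these replies. If `x = 0`, then `u` is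
only required to be an upper bound for the payoffs against `y`. -/
structure IsBestReply {α β : Type*} [Fintype β] (M : Matrix α β ℝ) (x : α → ℝ) (y : β → ℝ)
    (u : ℝ) : Prop where
  nonneg : 0 ≤ x
  le : ∀ i, (M *ᵥ y) i ≤ u
  eq : ∀ i, x i ≠ 0 → (M *ᵥ y) i = u

variable {α β : Type*} [Fintype β]

namespace IsBestReply

lemma smul {M : Matrix α β ℝ} {x : α → ℝ} {y : β → ℝ} {u c d : ℝ} (h : IsBestReply M x y u)
    (hc : 0 ≤ c) (hd : 0 ≤ d) : IsBestReply M (c • x) (d • y) (d * u) where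
  nonneg := smul_nonneg hc h.nonneg
  le i := by
    rw [mulVec_smul]
    exact mul_le_mul_of_nonneg_left (h.le i) hd
  eq i hi := by
    rw [mulVec_smul, Pi.smul_apply, h.eq i (right_ne_zero_of_mul hi), smul_eq_mul]

lemma ne_zero {M : Matrix α β ℝ} {x : α → ℝ} {y : β → ℝ} {u : ℝ} (h : IsBestReply M x y u)
    (hu : u ≠ 0) (hx : x ≠ 0) : y ≠ 0 := by
  rintro rfl
  obtain ⟨i, hi⟩ := Function.ne_iff.1 hx
  exact hu (by simpa using (h.eq i hi).symm)

lemma dotProduct_eq [Fintype α] {M : Matrix α β ℝ} {x : α → ℝ} {y : β → ℝ} {u : ℝ}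
    (h : IsBestReply M x y u) (hx : IsDist x) : x ⬝ᵥ M *ᵥ y = u := by
  have weighted (i : α) : x i * (M *ᵥ y) i = x i * u := by
    by_cases hi : x i = 0
    · rw [hi, zero_mul, zero_mul]
    · rw [h.eq i hi]
  rw [dotProduct, sum_congr rfl fun i _ ↦ weighted i, ← sum_mul, hx.2, one_mul]

lemma dotProduct_le [Fintype α] {M : Matrix α β ℝ} {x x' : α → ℝ} {y : β → ℝ} {u : ℝ}
    (h : IsBestReply M x y u) (hx' : IsDist x') : x' ⬝ᵥ M *ᵥ y ≤ u :=
  calc x' ⬝ᵥ M *ᵥ y ≤ ∑ i, x' i * u :=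
        sum_le_sum fun i _ ↦ mul_le_mul_of_nonneg_left (h.le i) (hx'.1 i)
    _ = u := by rw [← sum_mul, hx'.2, one_mul]

end IsBestReply

lemma isBestReply_of_forall_dotProduct_le [Fintype α] {M : Matrix α β ℝ} {x : α → ℝ}
    {y : β → ℝ} (hx : IsDist x) (hmax : ∀ x', IsDist x' → x' ⬝ᵥ M *ᵥ y ≤ x ⬝ᵥ M *ᵥ y) :
    IsBestReply M x y (x ⬝ᵥ M *ᵥ y) := by
  classical
  have le (i : α) : (M *ᵥ y) i ≤ x ⬝ᵥ M *ᵥ y := by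
    simpa only [single_one_dotProduct] using hmax _ (single_mem_stdSimplex ℝ i)
  refine ⟨hx.1, le, fun i hi ↦ ?_⟩
  have regret_nonneg (k : α) (_ : k ∈ univ) : 0 ≤ x k * (x ⬝ᵥ M *ᵥ y - (M *ᵥ y) k) :=
    mul_nonneg (hx.1 k) (sub_nonneg.2 (le k))
  have sum_regret : ∑ k, x k * (x ⬝ᵥ M *ᵥ y - (M *ᵥ y) k) = 0 := by
    simp only [mul_sub, sum_sub_distrib, ← sum_mul, hx.2, one_mul]
    exact sub_self _
  have regret := (sum_eq_zero_iff_of_nonneg regret_nonneg).1 sum_regret i (mem_univ i)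
  exact (sub_eq_zero.1 ((mul_eq_zero.1 regret).resolve_left hi)).symm

lemma isNash_iff {R C : Matrix β β ℝ} {x y : β → ℝ} :
    IsNash R C x y ↔ IsDist x ∧ IsDist y ∧
      IsBestReply R x y (pay R x y) ∧ IsBestReply Cᵀ y x (pay C x y) := by
  rw [← pay_transpose C x y]
  simp only [IsNash, ← pay_transpose C, pay_eq_dotProduct]
  exact ⟨fun ⟨hx, hy, hR, hC⟩ ↦ ⟨hx, hy, isBestReply_of_forall_dotProduct_le hx hR,
      isBestReply_of_forall_dotProduct_le hy hC⟩,
    fun ⟨hx, hy, hR, hC⟩ ↦ ⟨hx, hy, fun _ ↦ hR.dotProduct_le, fun _ ↦ hC.dotProduct_le⟩⟩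

lemma isBestReply_fromBlocks_iff {α β γ δ : Type*} [Fintype γ] [Fintype δ] {A : Matrix α δ ℝ}
    {B : Matrix β γ ℝ} {p : α ⊕ β → ℝ} {q : γ ⊕ δ → ℝ} {u : ℝ} :
    IsBestReply (fromBlocks 0 A B 0) p q u ↔
      IsBestReply A (p ∘ Sum.inl) (q ∘ Sum.inr) u ∧
        IsBestReply B (p ∘ Sum.inr) (q ∘ Sum.inl) u := by
  constructor
  · rintro ⟨nonneg, le, eq⟩
    simp only [Sum.forall, fromBlocks_mulVec, zero_mulVec, zero_add, add_zero, Sum.elim_inl,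
      Sum.elim_inr] at le eq
    exact ⟨⟨fun i ↦ nonneg (.inl i), le.1, eq.1⟩, ⟨fun i ↦ nonneg (.inr i), le.2, eq.2⟩⟩
  · rintro ⟨hA, hB⟩
    refine ⟨Sum.forall.2 ⟨hA.nonneg, hB.nonneg⟩, ?_, ?_⟩ <;>
      simp only [Sum.forall, fromBlocks_mulVec, zero_mulVec, zero_add, add_zero, Sum.elim_inl,
        Sum.elim_inr]
    exacts [⟨hA.le, hB.le⟩, ⟨hA.eq, hB.eq⟩]

end BestReply

section PositiveReplies

/-- Every mixed strategy admits a pure reply with positive payoff; for nonnegative `M` this is the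
positive utility property. Mixed strategies need not be normalized here: `0 < y` is the strict
product order, so `y` is any nonnegative nonzero vector. -/
def HasPositiveReplies {α β : Type*} [Fintype β] (M : Matrix α β ℝ) : Prop :=
  ∀ y : β → ℝ, 0 < y → ∃ i, 0 < (M *ᵥ y) i

variable {α β γ δ : Type*} [Fintype γ] [Fintype δ]

lemma IsBestReply.payoff_pos {M : Matrix α γ ℝ} {x : α → ℝ} {y : γ → ℝ} {u : ℝ}
    (h : IsBestReply M x y u) (hM : HasPositiveReplies M) (hy : 0 < y) : 0 < u :=
  let ⟨i, hi⟩ := hM y hy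
  hi.trans_le (h.le i)

lemma WinLose.nonneg {M : α → α → ℝ} (hM : WinLose M) (i j : α) : 0 ≤ M i j := by
  rcases hM i j with h | h <;> simp only [h, le_refl, zero_le_one]

lemma hasPositiveReplies_of_nonneg {M : Matrix α γ ℝ} (hM : ∀ i j, 0 ≤ M i j)
    (hpos : ∀ j, ∃ i, 0 < M i j) : HasPositiveReplies M := by
  intro y hy
  obtain ⟨hy_nonneg, j, hj⟩ := Pi.lt_def.1 hy
  obtain ⟨i, hi⟩ := hpos j
  exact ⟨i, sum_pos' (fun k _ ↦ mul_nonneg (hM i k) (hy_nonneg k)) ⟨j, mem_univ j, mul_pos hi hj⟩⟩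

lemma HasPositiveReplies.fromBlocks {A : Matrix α δ ℝ} {B : Matrix β γ ℝ}
    (hA : HasPositiveReplies A) (hB : HasPositiveReplies B) :
    HasPositiveReplies (fromBlocks 0 A B 0) := by
  intro q hq
  obtain ⟨q_nonneg, j | j, hj⟩ := Pi.lt_def.1 hq
  · obtain ⟨i, hi⟩ := hB (q ∘ Sum.inl) (Pi.lt_def.2 ⟨fun k ↦ q_nonneg (.inl k), j, hj⟩)
    exact ⟨.inr i, by simpa [fromBlocks_mulVec] using hi⟩
  · obtain ⟨i, hi⟩ := hA (q ∘ Sum.inr) (Pi.lt_def.2 ⟨fun k ↦ q_nonneg (.inr k), j, hj⟩)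
    exact ⟨.inl i, by simpa [fromBlocks_mulVec] using hi⟩

end PositiveReplies

section LabeledPairs

variable {α β : Type*} [Fintype α] [Fintype β]

/-- The completely labeled pairs of the best reply polytopes of `⟨R, C⟩`: pairs of mutual best
replies, normalized so that the payoffs, rather than the total weights, are `1`. The pair `0` is
the artificial equilibrium of the Lemke–Howson algorithm. -/
def labeledPairs (R C : Matrix α β ℝ) : Set ((α → ℝ) × (β → ℝ)) :=
  {p | IsBestReply R p.1 p.2 1 ∧ IsBestReply Cᵀ p.2 p.1 1}

lemma zero_mem_labeledPairs (R C : Matrix α β ℝ) : 0 ∈ labeledPairs R C := by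
  constructor <;> constructor <;> simp

lemma pos_of_mem_labeledPairs {R C : Matrix α β ℝ} {p : (α → ℝ) × (β → ℝ)}
    (hp : p ∈ labeledPairs R C) (hp0 : p ≠ 0) : 0 < p.1 ∧ 0 < p.2 := by
  have fst_iff_snd : p.1 ≠ 0 ↔ p.2 ≠ 0 := ⟨hp.1.ne_zero one_ne_zero, hp.2.ne_zero one_ne_zero⟩
  have fst_ne_zero : p.1 ≠ 0 := fun h ↦ hp0 (Prod.ext h (by_contra fun h' ↦ fst_iff_snd.2 h' h))
  exact ⟨hp.1.nonneg.lt_of_ne' fst_ne_zero, hp.2.nonneg.lt_of_ne' (fst_iff_snd.1 fst_ne_zero)⟩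

/-- The set `NE(⟨R, C⟩)` of Nash equilibria of the bimatrix game `⟨R, C⟩`. -/
def nashEquilibria (R C : Matrix α α ℝ) : Set ((α → ℝ) × (α → ℝ)) :=
  {p | NEPair R C p}

/-- The rescaling that turns Nash equilibria into completely labeled pairs. -/
noncomputable def normalizePayoffs (R C : Matrix α α ℝ) (p : (α → ℝ) × (α → ℝ)) :
    (α → ℝ) × (α → ℝ) :=
  ((pay C p.1 p.2)⁻¹ • p.1, (pay R p.1 p.2)⁻¹ • p.2)

/-- The rescaling that turns nonzero completely labeled pairs into Nash equilibria. -/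
noncomputable def normalizeWeights (p : (α → ℝ) × (β → ℝ)) : (α → ℝ) × (β → ℝ) :=
  ((∑ i, p.1 i)⁻¹ • p.1, (∑ j, p.2 j)⁻¹ • p.2)

lemma pay_pos_of_mem_nashEquilibria {R C : Matrix α α ℝ} (hR : HasPositiveReplies R)
    (hC : HasPositiveReplies Cᵀ) {p : (α → ℝ) × (α → ℝ)} (hp : p ∈ nashEquilibria R C) :
    0 < pay R p.1 p.2 ∧ 0 < pay C p.1 p.2 :=
  let ⟨hx, hy, hRp, hCp⟩ := isNash_iff.1 hp
  ⟨hRp.payoff_pos hR hy.pos, hCp.payoff_pos hC hx.pos⟩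

lemma normalizePayoffs_mem_labeledPairs {R C : Matrix α α ℝ} (hR : HasPositiveReplies R)
    (hC : HasPositiveReplies Cᵀ) {p : (α → ℝ) × (α → ℝ)} (hp : p ∈ nashEquilibria R C) :
    normalizePayoffs R C p ∈ labeledPairs R C \ {0} := by
  obtain ⟨hRpos, hCpos⟩ := pay_pos_of_mem_nashEquilibria hR hC hp
  obtain ⟨hx, -, hRp, hCp⟩ := isNash_iff.1 hp
  have hR1 := hRp.smul (inv_nonneg.2 hCpos.le) (inv_nonneg.2 hRpos.le)
  have hC1 := hCp.smul (inv_nonneg.2 hRpos.le) (inv_nonneg.2 hCpos.le)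
  rw [inv_mul_cancel₀ hRpos.ne'] at hR1
  rw [inv_mul_cancel₀ hCpos.ne'] at hC1
  exact ⟨⟨hR1, hC1⟩, fun h ↦
    smul_ne_zero (inv_ne_zero hCpos.ne') hx.pos.ne' (congrArg Prod.fst h)⟩

lemma isBestReply_normalizeWeights {R C : Matrix α β ℝ} {p : (α → ℝ) × (β → ℝ)}
    (hp : p ∈ labeledPairs R C) :
    IsBestReply R (normalizeWeights p).1 (normalizeWeights p).2 (∑ j, p.2 j)⁻¹ ∧
      IsBestReply Cᵀ (normalizeWeights p).2 (normalizeWeights p).1 (∑ i, p.1 i)⁻¹ := by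
  have hx_inv : 0 ≤ (∑ i, p.1 i)⁻¹ := inv_nonneg.2 (sum_nonneg fun i _ ↦ hp.1.nonneg i)
  have hy_inv : 0 ≤ (∑ j, p.2 j)⁻¹ := inv_nonneg.2 (sum_nonneg fun j _ ↦ hp.2.nonneg j)
  have hR := hp.1.smul hx_inv hy_inv
  have hC := hp.2.smul hy_inv hx_inv
  rw [mul_one] at hR hC
  exact ⟨hR, hC⟩

lemma isDist_normalizeWeights {R C : Matrix α β ℝ} {p : (α → ℝ) × (β → ℝ)}
    (hp : p ∈ labeledPairs R C) (hp0 : p ≠ 0) :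
    IsDist (normalizeWeights p).1 ∧ IsDist (normalizeWeights p).2 :=
  (pos_of_mem_labeledPairs hp hp0).imp isDist_inv_sum_smul isDist_inv_sum_smul

lemma pay_normalizeWeights {R C : Matrix α α ℝ} {p : (α → ℝ) × (α → ℝ)}
    (hp : p ∈ labeledPairs R C) (hp0 : p ≠ 0) :
    pay R (normalizeWeights p).1 (normalizeWeights p).2 = (∑ j, p.2 j)⁻¹ ∧
      pay C (normalizeWeights p).1 (normalizeWeights p).2 = (∑ i, p.1 i)⁻¹ := by
  obtain ⟨hx, hy⟩ := isDist_normalizeWeights hp hp0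
  obtain ⟨hR, hC⟩ := isBestReply_normalizeWeights hp
  rw [← pay_transpose C, pay_eq_dotProduct, pay_eq_dotProduct]
  exact ⟨hR.dotProduct_eq hx, hC.dotProduct_eq hy⟩

lemma normalizeWeights_mem_nashEquilibria {R C : Matrix α α ℝ} {p : (α → ℝ) × (α → ℝ)}
    (hp : p ∈ labeledPairs R C) (hp0 : p ≠ 0) : normalizeWeights p ∈ nashEquilibria R C := by
  obtain ⟨hx, hy⟩ := isDist_normalizeWeights hp hp0
  refine isNash_iff.2 ⟨hx, hy, ?_⟩
  rw [(pay_normalizeWeights hp hp0).1, (pay_normalizeWeights hp hp0).2]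
  exact isBestReply_normalizeWeights hp

lemma normalizeWeights_normalizePayoffs {R C : Matrix α α ℝ} (hR : HasPositiveReplies R)
    (hC : HasPositiveReplies Cᵀ) {p : (α → ℝ) × (α → ℝ)} (hp : p ∈ nashEquilibria R C) :
    normalizeWeights (normalizePayoffs R C p) = p := by
  obtain ⟨hRpos, hCpos⟩ := pay_pos_of_mem_nashEquilibria hR hC hp
  simp only [normalizeWeights, normalizePayoffs, hp.1.sum_smul, hp.2.1.sum_smul, inv_inv,
    smul_inv_smul₀ hRpos.ne', smul_inv_smul₀ hCpos.ne']

lemma normalizePayoffs_normalizeWeights {R C : Matrix α α ℝ} {p : (α → ℝ) × (α → ℝ)}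
    (hp : p ∈ labeledPairs R C) (hp0 : p ≠ 0) :
    normalizePayoffs R C (normalizeWeights p) = p := by
  obtain ⟨payR, payC⟩ := pay_normalizeWeights hp hp0
  obtain ⟨hx, hy⟩ := pos_of_mem_labeledPairs hp hp0
  rw [normalizePayoffs, payR, payC, inv_inv, inv_inv]
  exact Prod.ext (smul_inv_smul₀ (Fintype.sum_pos hx).ne' _)
    (smul_inv_smul₀ (Fintype.sum_pos hy).ne' _)

theorem encard_nashEquilibria_add_one {R C : Matrix α α ℝ} (hR : HasPositiveReplies R)
    (hC : HasPositiveReplies Cᵀ) : (nashEquilibria R C).encard + 1 = (labeledPairs R C).encard := by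
  have bij : Set.BijOn (normalizePayoffs R C) (nashEquilibria R C) (labeledPairs R C \ {0}) :=
    Set.InvOn.bijOn (f' := normalizeWeights)
      ⟨fun _ ↦ normalizeWeights_normalizePayoffs hR hC,
        fun _ hp ↦ normalizePayoffs_normalizeWeights hp.1 hp.2⟩
      (fun _ ↦ normalizePayoffs_mem_labeledPairs hR hC)
      (fun _ hp ↦ normalizeWeights_mem_nashEquilibria hp.1 hp.2)
  rw [Set.encard_congr bij.equiv, Set.encard_sdiff_singleton_add_one (zero_mem_labeledPairs R C)]

end LabeledPairs

section Symmetrization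

/-- The regrouping `((x₁, x₂), (y₁, y₂)) ↦ ((x₁, y₂), (y₁, x₂))` of a profile of the symmetrization
into two profiles of the original game. -/
def crossEquiv (α β : Type*) :
    ((α ⊕ β → ℝ) × (α ⊕ β → ℝ)) ≃ ((α → ℝ) × (β → ℝ)) × ((α → ℝ) × (β → ℝ)) where
  toFun p := ((p.1 ∘ Sum.inl, p.2 ∘ Sum.inr), (p.2 ∘ Sum.inl, p.1 ∘ Sum.inr))
  invFun r := (Sum.elim r.1.1 r.2.2, Sum.elim r.2.1 r.1.2)
  left_inv p := by simp only [Sum.elim_comp_inl_inr]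
  right_inv r := by simp only [Sum.elim_comp_inl, Sum.elim_comp_inr]

lemma labeledPairs_fromBlocks {α β : Type*} [Fintype α] [Fintype β] (R C : Matrix α β ℝ) :
    labeledPairs (fromBlocks 0 R Cᵀ 0) (fromBlocks 0 R Cᵀ 0)ᵀ =
      crossEquiv α β ⁻¹' (labeledPairs R C ×ˢ labeledPairs R C) := by
  ext p
  simp only [labeledPairs, transpose_transpose, isBestReply_fromBlocks_iff, crossEquiv,
    Set.mem_preimage, Set.mem_prod, Set.mem_ofPred_eq]
  tauto

lemma ghrS_eq_fromBlocks {n : ℕ} (R C : Matrix (Fin n) (Fin n) ℝ) :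
    ghrS R C = fromBlocks 0 R Cᵀ 0 := by
  ext (i | i) (j | j) <;> rfl

lemma ghrST_eq_transpose {n : ℕ} (R C : Matrix (Fin n) (Fin n) ℝ) :
    ghrST R C = Matrix.transpose (ghrS R C) :=
  rfl

theorem ghr_nash_count_general {n : ℕ} {R C : Matrix (Fin n) (Fin n) ℝ}
    (hR : HasPositiveReplies R) (hC : HasPositiveReplies Cᵀ) :
    (nashEquilibria (ghrS R C) (ghrST R C)).encard =
      (nashEquilibria R C).encard * ((nashEquilibria R C).encard + 2) := by
  have hS : HasPositiveReplies (fromBlocks 0 R Cᵀ 0) := hR.fromBlocks hC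
  rw [ghrST_eq_transpose, ghrS_eq_fromBlocks]
  refine WithTop.add_right_cancel ENat.one_ne_top ?_
  calc (nashEquilibria (fromBlocks 0 R Cᵀ 0) (fromBlocks 0 R Cᵀ 0)ᵀ).encard + 1
      = (labeledPairs (fromBlocks 0 R Cᵀ 0) (fromBlocks 0 R Cᵀ 0)ᵀ).encard :=
        encard_nashEquilibria_add_one hS (by rwa [transpose_transpose])
    _ = (labeledPairs R C).encard * (labeledPairs R C).encard := by
        rw [labeledPairs_fromBlocks, Set.encard_preimage_of_bijective (crossEquiv _ _).bijective,
          Set.encard_prod]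
    _ = (nashEquilibria R C).encard * ((nashEquilibria R C).encard + 2) + 1 := by
        rw [← encard_nashEquilibria_add_one hR hC]
        ring

lemma finite_and_ncard_nashEquilibria_ghrS {n : ℕ} {R C : Matrix (Fin n) (Fin n) ℝ}
    (hR : HasPositiveReplies R) (hC : HasPositiveReplies Cᵀ) (hfin : (nashEquilibria R C).Finite) :
    (nashEquilibria (ghrS R C) (ghrST R C)).Finite ∧
      (nashEquilibria (ghrS R C) (ghrST R C)).ncard =
        (nashEquilibria R C).ncard * ((nashEquilibria R C).ncard + 2) := by
  have count := ghr_nash_count_general hR hC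
  rw [← hfin.cast_ncard_eq] at count
  norm_cast at count
  exact ⟨Set.finite_of_encard_eq_coe count, congrArg ENat.toNat count⟩

end Symmetrization

/-- If a win-lose bimatrix game `⟨R, C⟩` with the positive utility property has a finite
set of Nash equilibria of cardinality `m`, then its GHR-symmetrization has a finite set
of Nash equilibria, of cardinality exactly `m·(m + 2)`. -/
theorem ghr_nash_count {n m : ℕ}
    (R C : Fin n → Fin n → ℝ) (hR : WinLose R) (hC : WinLose C)
    (pupR : ∀ s₂, ∃ s₁, 0 < R s₁ s₂) (pupC : ∀ s₁, ∃ s₂, 0 < C s₁ s₂)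
    (hfin : {p : (Fin n → ℝ) × (Fin n → ℝ) | IsNash R C p.1 p.2}.Finite)
    (hcard : {p : (Fin n → ℝ) × (Fin n → ℝ) | IsNash R C p.1 p.2}.ncard = m) :
    {q : ((Fin n ⊕ Fin n) → ℝ) × ((Fin n ⊕ Fin n) → ℝ) |
        IsNash (ghrS R C) (ghrST R C) q.1 q.2}.Finite ∧
    {q : ((Fin n ⊕ Fin n) → ℝ) × ((Fin n ⊕ Fin n) → ℝ) |
        IsNash (ghrS R C) (ghrST R C) q.1 q.2}.ncard = m * (m + 2) := by
  subst hcard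
  exact finite_and_ncard_nashEquilibria_ghrS (hasPositiveReplies_of_nonneg hR.nonneg pupR)
    (hasPositiveReplies_of_nonneg (fun i j ↦ hC.nonneg j i) pupC) hfin
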